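/- arXiv:2302.11417 — 3 statements merged into one kernel-verified Lean document; each statement's English description precedes it below -/
import Mathlib

section
/- Let H = (X, (s_i)_{i ∈ I}) be a hypergraph with correspondence τ and let f be a minimal Roman hitting function for (H, τ). Then for every x ∈ f⁻¹(2) there exists an index i ∈ I with i ≠ τ(x) such that s_i ∩ f⁻¹(2) = {x}. -/
/-- A Roman hitting set of the hypergraph given by the hyperedge family `s`:
a pair `(R1, R2)` such that every index `i` is in `R1` or `s i` meets `R2`. -/
def IsRHS {X I : Type*} (s : I → Set X) (R1 : Set I) (R2 : Set X) : Prop :=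
  ∀ i : I, i ∈ R1 ∨ (s i ∩ R2).Nonempty

/-- A minimal Roman hitting set: a rhs such that every rhs `(P1, P2) ≤ (R1, R2)`
equals `(R1, R2)`. -/
def IsMinimalRHS {X I : Type*} (s : I → Set X) (R1 : Set I) (R2 : Set X) : Prop :=
  IsRHS s R1 R2 ∧
    ∀ (P1 : Set I) (P2 : Set X), IsRHS s P1 P2 → P1 ⊆ R1 → P2 ⊆ R2 → P1 = R1 ∧ P2 = R2

/-- `D` is a hitting set of the subfamily `(s i)_{i ∈ J}`. -/
def IsHittingSet {X I : Type*} (s : I → Set X) (J : Set I) (D : Set X) : Prop :=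
  ∀ i ∈ J, (D ∩ s i).Nonempty

/-- `D` is a minimal hitting set of the subfamily `(s i)_{i ∈ J}`:
no proper subset of `D` is a hitting set of the subfamily. -/
def IsMinimalHittingSet {X I : Type*} (s : I → Set X) (J : Set I) (D : Set X) : Prop :=
  IsHittingSet s J D ∧ ∀ D' : Set X, D' ⊂ D → ¬ IsHittingSet s J D'

/-- A Roman hitting function for the hypergraph `s` with correspondence `τ`. -/
def IsRHF {X I : Type*} (s : I → Set X) (τ : X → I) (f : X → Fin 3) : Prop :=
  ∀ i : I, (∃ x ∈ s i, f x = 2) ∨ (∃ x : X, τ x = i ∧ f x = 1)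

/-- A minimal Roman hitting function: every rhf `g ≤ f` (pointwise) equals `f`. -/
def IsMinimalRHF {X I : Type*} (s : I → Set X) (τ : X → I) (f : X → Fin 3) : Prop :=
  IsRHF s τ f ∧ ∀ g : X → Fin 3, IsRHF s τ g → (∀ x, g x ≤ f x) → g = f

/-- `f` is extensible: some minimal rhf `g` satisfies `f ≤ g` pointwise. -/
def Extensible {X I : Type*} (s : I → Set X) (τ : X → I) (f : X → Fin 3) : Prop :=
  ∃ g : X → Fin 3, IsMinimalRHF s τ g ∧ ∀ x, f x ≤ g x

theorem IsRHF.update_one {X I : Type*} [DecidableEq X] {s : I → Set X} {τ : X → I}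
    {f : X → Fin 3} (hf : IsRHF s τ f) {x : X}
    (hx : ∀ i, i ≠ τ x → s i ∩ f ⁻¹' {2} ≠ {x}) :
    IsRHF s τ (Function.update f x 1) := by
  intro i
  by_cases hi : i = τ x
  · exact .inr ⟨x, hi.symm, Function.update_self x 1 f⟩
  rcases hf i with ⟨y, hys, hy⟩ | ⟨y, hτy, hy⟩
  · obtain ⟨z, ⟨hzs, hz⟩, hzx⟩ : ∃ z ∈ s i ∩ f ⁻¹' {2}, z ≠ x := by
      by_contra! h
      exact hx i hi (Set.eq_singleton_iff_nonempty_unique_mem.2 ⟨⟨y, hys, hy⟩, h⟩)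
    exact .inl ⟨z, hzs, (Function.update_of_ne hzx 1 f).trans hz⟩
  · have hyx : y ≠ x := by
      rintro rfl
      exact hi hτy.symm
    exact .inr ⟨y, hτy, (Function.update_of_ne hyx 1 f).trans hy⟩

theorem IsMinimalRHF.not_isRHF_of_lt {X I : Type*} {s : I → Set X} {τ : X → I}
    {f g : X → Fin 3} (hf : IsMinimalRHF s τ f) (hgf : g < f) : ¬ IsRHF s τ g :=
  fun hg => hgf.ne (hf.2 g hg hgf.le)

theorem minimalRHF_private_edge_general {X I : Type*} (s : I → Set X) (τ : X → I)
    (f : X → Fin 3) (hmin : IsMinimalRHF s τ f) :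
    ∀ x ∈ f ⁻¹' {2}, ∃ i : I, i ≠ τ x ∧ s i ∩ f ⁻¹' {2} = {x} := by
  classical
  intro x (hx : f x = 2)
  by_contra! hno
  -- Lowering `f x` to `1` loses nothing: `x` still accounts for the index `τ x`, and every other
  -- edge containing `x` contains a second vertex of value `2`.
  have hlt : Function.update f x 1 < f := update_lt_self_iff.2 (by simp [hx])
  exact hmin.not_isRHF_of_lt hlt (hmin.1.update_one hno)

/-- For a minimal rhf `f` and every `x ∈ f⁻¹(2)`, there is an
index `i ≠ τ x` with `s i ∩ f⁻¹(2) = {x}`. -/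
theorem minimalRHF_private_edge {X I : Type*} [Fintype X] [Fintype I]
    (s : I → Set X) (τ : X → I) (hτ : ∀ x, x ∈ s (τ x))
    (f : X → Fin 3) (hmin : IsMinimalRHF s τ f) :
    ∀ x ∈ f ⁻¹' {2}, ∃ i : I, i ≠ τ x ∧ s i ∩ f ⁻¹' {2} = {x} :=
  minimalRHF_private_edge_general s τ f hmin
end

section
/- Let H = (X, (s_i)_{i ∈ I}) be a hypergraph with correspondence τ. A function f : X → {0,1,2} is a minimal Roman hitting function for (H, τ) if and only if the following four conditions hold: (0) for all x, y ∈ f⁻¹(1), x ≠ y implies τ(x) ≠ τ(y); (1) for every x ∈ f⁻¹(1), s_{τ(x)} ∩ f⁻¹(2) = ∅; (2) for every x ∈ f⁻¹(2) there exists i ∈ I with i ≠ τ(x) and s_i ∩ f⁻¹(2) = {x}; and (3) f⁻¹(2) is a minimal hitting set of the family (s_i)_{i ∈ J}, where J = { i ∈ I : τ⁻¹(i) ∩ f⁻¹(1) = ∅ }. -/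
/-!
Since `x ∈ s (τ x)`, raising values preserves the Roman hitting property, so `f` is minimal as soon
as no single value can be lowered by one. Say that a vertex `x` of value `1` claims the index `τ x`.
Lowering `f x` from `1` to `0` fails exactly when the claim of `x` is the only thing that takes care
of `τ x`, which is (0) and (1) at `x`. Lowering `f x` from `2` to `1` lets `x` claim `τ x`, so it
fails exactly when `x` is the only vertex of value `2` on some unclaimed edge other than `s (τ x)`.
Under (1), every edge containing a vertex of value `2` is unclaimed, so this is (2), which in turn
supplies the private edges that make the hitting set in (3) minimal.
-/

open Function

section Update

variable {X : Type*} [DecidableEq X]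

theorem update_preimage_singleton_of_ne {α : Type*} (f : X → α) (x : X) {v a : α} (hva : v ≠ a) :
    update f x v ⁻¹' {a} = f ⁻¹' {a} \ {x} := by
  ext y
  rcases eq_or_ne y x with rfl | hyx
  · simp [hva]
  · simp [hyx]

theorem minimal_iff_forall_not_update {β : X → Type*} [∀ x, Preorder (β x)]
    {P : (∀ x, β x) → Prop} (hP : ∀ ⦃g f⦄, g ≤ f → P g → P f) {f : ∀ x, β x} :
    Minimal P f ↔ P f ∧ ∀ x, ∀ v < f x, ¬ P (update f x v) := by
  refine ⟨fun hf ↦ ⟨hf.prop, fun x v hv hup ↦ ?_⟩, fun ⟨hf, hlow⟩ ↦ ⟨hf, fun g hg hgf ↦ ?_⟩⟩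
  · exact hf.not_prop_of_lt (update_lt_self_iff.2 hv) hup
  · by_contra hfg
    obtain ⟨x, hx⟩ : ∃ x, ¬ f x ≤ g x := by simpa only [Pi.le_def, not_forall] using hfg
    have hg_le : g ≤ update f x (g x) := le_update_iff.2 ⟨le_rfl, fun y _ ↦ hgf y⟩
    exact hlow x (g x) (lt_of_le_not_ge (hgf x) hx) (hP hg_le hg)

end Update

section HittingSet

variable {X I : Type*} {s : I → Set X} {J K : Set I} {D E : Set X}

theorem IsHittingSet.mono (hD : IsHittingSet s J D) (hDE : D ⊆ E) : IsHittingSet s J E :=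
  fun i hi ↦ (hD i hi).mono (Set.inter_subset_inter_left _ hDE)

theorem IsHittingSet.anti (hD : IsHittingSet s J D) (hKJ : K ⊆ J) : IsHittingSet s K D :=
  fun i hi ↦ hD i (hKJ hi)

theorem IsHittingSet.sdiff_singleton_iff (hD : IsHittingSet s J D) {x : X} :
    IsHittingSet s J (D \ {x}) ↔ ∀ i ∈ J, s i ∩ D ≠ {x} := by
  refine forall₂_congr fun i hi ↦ ?_
  rw [Set.inter_comm (s i), Ne, ← Set.Nonempty.subset_singleton_iff (hD i hi),
    ← Set.inter_sdiff_right_comm, Set.sdiff_nonempty]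

theorem isMinimalHittingSet_iff_minimal :
    IsMinimalHittingSet s J D ↔ Minimal (IsHittingSet s J) D := by
  rw [minimal_iff_forall_lt]
  rfl

theorem isMinimalHittingSet_iff_forall_exists_inter_eq_singleton :
    IsMinimalHittingSet s J D ↔
      IsHittingSet s J D ∧ ∀ x ∈ D, ∃ i ∈ J, s i ∩ D = {x} := by
  rw [isMinimalHittingSet_iff_minimal,
    Set.minimal_iff_forall_sdiff_singleton fun _ _ hD hDE ↦ hD.mono hDE]
  refine and_congr_right fun hD ↦ forall₂_congr fun x _ ↦ ?_
  simp only [hD.sdiff_singleton_iff, not_forall, not_not, exists_prop]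

end HittingSet

section RomanHittingFunction

variable {X I : Type*} {s : I → Set X} {τ : X → I} {f g : X → Fin 3}

/-- The indices corresponding to no vertex of value `1`, that is, the set `J` of condition (3): the
hyperedges that the vertices of value `2` have to hit. -/
def unclaimed (τ : X → I) (f : X → Fin 3) : Set I :=
  {i | τ ⁻¹' {i} ∩ f ⁻¹' {1} = ∅}

theorem mem_unclaimed {i : I} : i ∈ unclaimed τ f ↔ ∀ x, τ x = i → f x ≠ 1 :=
  Set.eq_empty_iff_forall_notMem.trans (forall_congr' fun _ ↦ not_and)

theorem isRHF_iff_isHittingSet :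
    IsRHF s τ f ↔ IsHittingSet s (unclaimed τ f) (f ⁻¹' {2}) := by
  refine forall_congr' fun i ↦ ?_
  rw [or_iff_not_imp_right, mem_unclaimed, Set.inter_comm]
  simp only [not_exists, not_and]
  rfl

theorem IsRHF.mono (hτ : ∀ x, x ∈ s (τ x)) (hgf : g ≤ f) (hg : IsRHF s τ g) : IsRHF s τ f := by
  intro i
  rcases hg i with ⟨x, hxi, hx⟩ | ⟨x, rfl, hx⟩
  · have hfx : 2 ≤ f x := hx ▸ hgf x
    exact .inl ⟨x, hxi, by omega⟩
  · have hfx : 1 ≤ f x := hx ▸ hgf x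
    rcases (by omega : f x = 2 ∨ f x = 1) with hx2 | hx1
    · exact .inl ⟨x, hτ x, hx2⟩
    · exact .inr ⟨x, rfl, hx1⟩

theorem isMinimalRHF_iff_minimal : IsMinimalRHF s τ f ↔ Minimal (IsRHF s τ) f := by
  simp only [minimal_iff, eq_comm (a := f)]
  rfl

theorem mem_unclaimed_of_inter_nonempty (hdisj : ∀ x ∈ f ⁻¹' {1}, s (τ x) ∩ f ⁻¹' {2} = ∅) {i : I}
    (hi : (s i ∩ f ⁻¹' {2}).Nonempty) : i ∈ unclaimed τ f := by
  rw [mem_unclaimed]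
  rintro x rfl hx
  exact hi.ne_empty (hdisj x hx)

variable [DecidableEq X]

theorem isMinimalRHF_iff_forall_not_update (hτ : ∀ x, x ∈ s (τ x)) :
    IsMinimalRHF s τ f ↔ IsRHF s τ f ∧
      (∀ x ∈ f ⁻¹' {1}, ¬ IsRHF s τ (update f x 0)) ∧
      ∀ x ∈ f ⁻¹' {2}, ¬ IsRHF s τ (update f x 1) := by
  rw [isMinimalRHF_iff_minimal, minimal_iff_forall_not_update fun _ _ ↦ IsRHF.mono hτ]
  refine and_congr_right fun _ ↦ ⟨fun hlow ↦ ⟨fun x hx ↦ ?_, fun x hx ↦ ?_⟩, ?_⟩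
  · exact hlow x 0 (by rw [show f x = 1 from hx]; decide)
  · exact hlow x 1 (by rw [show f x = 2 from hx]; decide)
  · rintro ⟨hone, htwo⟩ x v hv hup
    rcases (by omega : f x = 1 ∧ v ≤ 0 ∨ f x = 2 ∧ v ≤ 1) with ⟨hx, hv0⟩ | ⟨hx, hv1⟩
    · exact hone x hx (hup.mono hτ (update_le_update_iff'.2 hv0))
    · exact htwo x hx (hup.mono hτ (update_le_update_iff'.2 hv1))

theorem IsRHF.update_zero_iff (hf : IsRHF s τ f) {x : X} (hx : f x = 1) :
    IsRHF s τ (update f x 0) ↔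
      (s (τ x) ∩ f ⁻¹' {2}).Nonempty ∨ ∃ y ∈ f ⁻¹' {1}, x ≠ y ∧ τ x = τ y := by
  have hupdate_two (y : X) : update f x 0 y = 2 ↔ f y = 2 := by grind
  have hupdate_one (y : X) : update f x 0 y = 1 ↔ x ≠ y ∧ f y = 1 := by grind
  simp only [IsRHF, hupdate_two, hupdate_one]
  constructor
  · intro h
    exact (h (τ x)).imp_right fun ⟨y, hyx, hne, hy⟩ ↦ ⟨y, hy, hne, hyx.symm⟩
  · intro hτx i
    rcases eq_or_ne (τ x) i with rfl | hxi
    · exact hτx.imp_right fun ⟨y, hy, hne, hxy⟩ ↦ ⟨y, hxy.symm, hne, hy⟩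
    · exact (hf i).imp_right fun ⟨y, hyi, hy⟩ ↦ ⟨y, hyi, by grind, hy⟩

theorem IsRHF.not_update_zero_iff (hf : IsRHF s τ f) {x : X} (hx : f x = 1) :
    ¬ IsRHF s τ (update f x 0) ↔
      (∀ y ∈ f ⁻¹' {1}, x ≠ y → τ x ≠ τ y) ∧ s (τ x) ∩ f ⁻¹' {2} = ∅ := by
  rw [hf.update_zero_iff hx, not_or, Set.not_nonempty_iff_eq_empty, and_comm]
  simp only [not_exists, not_and, Ne]

theorem unclaimed_update_one (τ : X → I) (f : X → Fin 3) (x : X) :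
    unclaimed τ (update f x 1) = unclaimed τ f \ {τ x} := by
  ext i
  simp only [Set.mem_sdiff, Set.mem_singleton_iff, mem_unclaimed]
  grind

theorem IsRHF.not_update_one_iff (hf : IsRHF s τ f) {x : X} :
    ¬ IsRHF s τ (update f x 1) ↔
      ∃ i ∈ unclaimed τ f, i ≠ τ x ∧ s i ∩ f ⁻¹' {2} = {x} := by
  have hhit : IsHittingSet s (unclaimed τ f \ {τ x}) (f ⁻¹' {2}) :=
    (isRHF_iff_isHittingSet.1 hf).anti Set.sdiff_subset
  rw [isRHF_iff_isHittingSet, unclaimed_update_one, update_preimage_singleton_of_ne f x (by decide),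
    hhit.sdiff_singleton_iff]
  simp only [Set.mem_sdiff, Set.mem_singleton_iff, not_forall, not_not, exists_prop, and_assoc]

end RomanHittingFunction

theorem minimalRHF_iff_general {X I : Type*} (s : I → Set X) (τ : X → I)
    (hτ : ∀ x, x ∈ s (τ x)) (f : X → Fin 3) :
    IsMinimalRHF s τ f ↔
      ((∀ x ∈ f ⁻¹' {1}, ∀ y ∈ f ⁻¹' {1}, x ≠ y → τ x ≠ τ y) ∧
       (∀ x ∈ f ⁻¹' {1}, s (τ x) ∩ f ⁻¹' {2} = ∅) ∧
       (∀ x ∈ f ⁻¹' {2}, ∃ i : I, i ≠ τ x ∧ s i ∩ f ⁻¹' {2} = {x}) ∧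
       IsMinimalHittingSet s {i : I | τ ⁻¹' {i} ∩ f ⁻¹' {1} = ∅} (f ⁻¹' {2})) := by
  classical
  change _ ↔ _ ∧ _ ∧ _ ∧ IsMinimalHittingSet s (unclaimed τ f) (f ⁻¹' {2})
  rw [isMinimalRHF_iff_forall_not_update hτ,
    isMinimalHittingSet_iff_forall_exists_inter_eq_singleton, ← isRHF_iff_isHittingSet]
  constructor
  · rintro ⟨hf, hone, htwo⟩
    have hprivate : ∀ x ∈ f ⁻¹' {2}, ∃ i ∈ unclaimed τ f, i ≠ τ x ∧ s i ∩ f ⁻¹' {2} = {x} :=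
      fun x hx ↦ hf.not_update_one_iff.1 (htwo x hx)
    exact ⟨fun x hx ↦ ((hf.not_update_zero_iff hx).1 (hone x hx)).1,
      fun x hx ↦ ((hf.not_update_zero_iff hx).1 (hone x hx)).2,
      fun x hx ↦ (hprivate x hx).imp fun _ hi ↦ hi.2,
      hf, fun x hx ↦ (hprivate x hx).imp fun _ hi ↦ ⟨hi.1, hi.2.2⟩⟩
  · rintro ⟨hinj, hdisj, hprivate, hf, -⟩
    refine ⟨hf, fun x hx ↦ (hf.not_update_zero_iff hx).2 ⟨hinj x hx, hdisj x hx⟩,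
      fun x hx ↦ hf.not_update_one_iff.2 ?_⟩
    obtain ⟨i, hix, hi⟩ := hprivate x hx
    have hi_nonempty : (s i ∩ f ⁻¹' {2}).Nonempty := hi ▸ Set.singleton_nonempty x
    exact ⟨i, mem_unclaimed_of_inter_nonempty hdisj hi_nonempty, hix, hi⟩

/-- Characterization of minimal Roman hitting functions. -/
theorem minimalRHF_iff {X I : Type*} [Fintype X] [Fintype I]
    (s : I → Set X) (τ : X → I) (hτ : ∀ x, x ∈ s (τ x))
    (f : X → Fin 3) :
    IsMinimalRHF s τ f ↔
      ((∀ x ∈ f ⁻¹' {1}, ∀ y ∈ f ⁻¹' {1}, x ≠ y → τ x ≠ τ y) ∧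
       (∀ x ∈ f ⁻¹' {1}, s (τ x) ∩ f ⁻¹' {2} = ∅) ∧
       (∀ x ∈ f ⁻¹' {2}, ∃ i : I, i ≠ τ x ∧ s i ∩ f ⁻¹' {2} = {x}) ∧
       IsMinimalHittingSet s {i : I | τ ⁻¹' {i} ∩ f ⁻¹' {1} = ∅} (f ⁻¹' {2})) :=
  minimalRHF_iff_general s τ hτ f
end

section
/- Let H = (X, (s_i)_{i ∈ I}) be a hypergraph with correspondence τ and let f be a minimal Roman hitting function for (H, τ). Then for every x ∈ f⁻¹(1) and every index i ∈ I with s_i = s_{τ(x)}, the set f⁻¹(1) ∩ τ⁻¹(i) is nonempty. -/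
/-!
If `f x = 1` and some vertex of `s (τ x)` has value `2`, then lowering `f x` to `0` keeps every
hyperedge hit, since `x` served only `τ x`; a minimal `f` forbids this. So no vertex of `s (τ x)`
has value `2`, and an index `i` with `s i ⊆ s (τ x)` can only be served by a vertex of value `1`.
-/

section

variable {X I : Type*} {s : I → Set X} {τ : X → I} {f : X → Fin 3} {x : X}

theorem IsRHF.update_zero [DecidableEq X] (hf : IsRHF s τ f) (hx : f x ≠ 2)
    (hit : ∃ y ∈ s (τ x), f y = 2) : IsRHF s τ (Function.update f x 0) := by
  have two_preserved {j : I} : (∃ z ∈ s j, f z = 2) → ∃ z ∈ s j, Function.update f x 0 z = 2 := by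
    rintro ⟨z, hz, hz2⟩
    have hzx : z ≠ x := fun h ↦ hx (h ▸ hz2)
    exact ⟨z, hz, by rwa [Function.update_of_ne hzx]⟩
  intro j
  rcases hf j with hit_j | ⟨z, rfl, hz1⟩
  · exact Or.inl (two_preserved hit_j)
  · rcases eq_or_ne z x with rfl | hzx
    · exact Or.inl (two_preserved hit)
    · exact Or.inr ⟨z, rfl, by rwa [Function.update_of_ne hzx]⟩

theorem IsMinimalRHF.ne_two_of_mem (hf : IsMinimalRHF s τ f) (hx : f x = 1) {y : X}
    (hy : y ∈ s (τ x)) : f y ≠ 2 := by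
  classical
  intro hy2
  have lowered_isRHF : IsRHF s τ (Function.update f x 0) :=
    hf.1.update_zero (by simp [hx]) ⟨y, hy, hy2⟩
  have lowered_eq : Function.update f x 0 = f :=
    hf.2 _ lowered_isRHF (update_le_self_iff.2 (Fin.zero_le _))
  have hx0 : 0 = f x := Function.update_eq_self_iff.1 lowered_eq
  simp [hx] at hx0

theorem minimalRHF_equal_edges_hit_by_one_general (hf : IsMinimalRHF s τ f) (hx : f x = 1)
    {i : I} (hi : s i ⊆ s (τ x)) : (f ⁻¹' {1} ∩ τ ⁻¹' {i}).Nonempty := by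
  rcases hf.1 i with ⟨y, hy, hy2⟩ | ⟨y, hyi, hy1⟩
  · exact absurd hy2 (hf.ne_two_of_mem hx (hi hy))
  · exact ⟨y, hy1, hyi⟩

end

/-- For a minimal rhf `f`, every `x ∈ f⁻¹(1)` and every index `i`
with `s i = s (τ x)` satisfy `f⁻¹(1) ∩ τ⁻¹(i) ≠ ∅`. -/
theorem minimalRHF_equal_edges_hit_by_one {X I : Type*} [Fintype X] [Fintype I]
    (s : I → Set X) (τ : X → I) (hτ : ∀ x, x ∈ s (τ x))
    (f : X → Fin 3) (hmin : IsMinimalRHF s τ f) :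
    ∀ x ∈ f ⁻¹' {1}, ∀ i : I, s i = s (τ x) →
      (f ⁻¹' {1} ∩ τ ⁻¹' {i}).Nonempty :=
  fun _ hx _ hi ↦ minimalRHF_equal_edges_hit_by_one_general hmin hx hi.subset
end
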